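/- For a finite complex Borel measure μ on [0,1) with t·|μ|([0,1−t)) bounded as t → 0⁺, the following are equivalent: (a) D_μ f = (Xf)*μ is a compact operator on L¹[0,1); (b) D_μ is weakly compact on L¹[0,1); (c) μ is absolutely continuous and t·|μ|([0,1−t)) → 0 as t → 0⁺. -/

import Mathlib

open MeasureTheory Set Filter Topology

noncomputable section

/-- Integral of a complex-valued function against a complex (Borel) measure,
defined via the Jordan decompositions of the real and imaginary parts. -/
def cInt {X : Type} [MeasurableSpace X] (μ : ComplexMeasure X) (f : X → ℂ) : ℂ :=
  ((∫ x, f x ∂μ.re.toJordanDecomposition.posPart) -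
      ∫ x, f x ∂μ.re.toJordanDecomposition.negPart) +
    Complex.I * ((∫ x, f x ∂μ.im.toJordanDecomposition.posPart) -
      ∫ x, f x ∂μ.im.toJordanDecomposition.negPart)

/-- A (positive) measure playing the role of the total variation `|μ|` of a complex
measure `μ` (it is equivalent to the classical total variation: `|μ| ≤ cTV μ ≤ 2|μ|`). -/
def cTV {X : Type} [MeasurableSpace X] (μ : ComplexMeasure X) : Measure X :=
  μ.re.totalVariation + μ.im.totalVariation

/-- `μ` is concentrated on the set `A`, i.e. `μ` is a measure "on `A`". -/
def ConcOn {X : Type} [MeasurableSpace X] (μ : ComplexMeasure X) (A : Set X) : Prop :=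
  ∀ E : Set X, MeasurableSet E → E ⊆ Aᶜ → μ E = 0

/-- `ρ` is the convolution `(Xν) * μ` of the complex measures `ν, μ` on `[0,1)`,
characterized by `ρ E = ∫∫ 1_E (t+s) t dμ(s) dν(t)` for Borel `E ⊆ [0,1)`. -/
def IsXConv (μ ν ρ : ComplexMeasure ℝ) : Prop :=
  ConcOn ρ (Ico 0 1) ∧
    ∀ E : Set ℝ, MeasurableSet E → E ⊆ Ico (0 : ℝ) 1 →
      ρ E = cInt ν fun t => (t : ℂ) * cInt μ fun s => E.indicator (1 : ℝ → ℂ) (t + s)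

/-- The Volterra algebra `L¹[0,1)` as a Banach space. -/
abbrev Volterra := Lp ℂ 1 (volume.restrict (Ico (0 : ℝ) 1))

/-- `D` is the derivation `D_μ f = (Xf) * μ` on `L¹[0,1)`, characterized weakly:
`∫ φ(t) (D f)(t) dt = ∫ ∫_{[0,1-s)} φ(t+s) t f(t) dt dμ(s)` for all `φ ∈ C₀[0,1)`. -/
def IsDmu (μ : ComplexMeasure ℝ) (D : Volterra →L[ℂ] Volterra) : Prop :=
  ∀ f : Volterra, ∀ φ : ℝ → ℂ, ContinuousOn φ (Icc 0 1) → φ 1 = 0 →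
    (∫ t, φ t * (D f : ℝ → ℂ) t ∂(volume.restrict (Ico (0 : ℝ) 1))) =
      cInt μ fun s =>
        ∫ t, φ (t + s) * ((t : ℂ) * (f : ℝ → ℂ) t)
          ∂(volume.restrict (Ico (0 : ℝ) (1 - s)))

/-!
Against a test function `φ` vanishing on `[1, ∞)`, Fubini gives `⟨φ, D f⟩ = ∫₀¹ f(t) D'φ(t) dt`
with `D'φ(t) = t ∫ φ(t + s) dμ(s)`.

If `μ` has density `g`, then `D f = ∫₀¹ f(t) G(t) dt` for the curve `G(t) = t g(· - t)`. Translation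
is continuous in `L¹`, so `G` maps `[0,1]` onto a compact set, and `D` maps the unit ball into the
closed convex hull of its rotations, which is compact.

Conversely, let `D` be weakly compact and `0 < a < 1`. The normalized indicators `ε⁻¹ 1_[a,a+ε)` lie
in the unit ball, and a weak cluster point `h ∈ L¹[0,1)` of their images under `D` satisfies
`⟨φ, h⟩ = D'φ(a) = a ∫ φ(a + s) dμ(s)`. Hence `a μ` translated by `a` has density `h` on `(0,1)`, so
`μ` is absolutely continuous on `[0, 1 - a)`.
-/

open scoped BoundedContinuousFunction Pointwise

section ComplexMeasure

variable {X : Type} [MeasurableSpace X] {μ : ComplexMeasure X}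

instance isFiniteMeasure_cTV : IsFiniteMeasure (cTV μ) := by
  unfold cTV SignedMeasure.totalVariation
  infer_instance

lemma re_posPart_le_cTV : μ.re.toJordanDecomposition.posPart ≤ cTV μ :=
  (Measure.le_add_right le_rfl).trans (Measure.le_add_right le_rfl)

lemma re_negPart_le_cTV : μ.re.toJordanDecomposition.negPart ≤ cTV μ :=
  (Measure.le_add_left le_rfl).trans (Measure.le_add_right le_rfl)

lemma im_posPart_le_cTV : μ.im.toJordanDecomposition.posPart ≤ cTV μ :=
  (Measure.le_add_right le_rfl).trans (Measure.le_add_left le_rfl)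

lemma im_negPart_le_cTV : μ.im.toJordanDecomposition.negPart ≤ cTV μ :=
  (Measure.le_add_left le_rfl).trans (Measure.le_add_left le_rfl)

lemma totalVariation_eq_zero_of_forall_subset {s : SignedMeasure X} {E : Set X}
    (hE : MeasurableSet E) (h : ∀ F ⊆ E, MeasurableSet F → s F = 0) : s.totalVariation E = 0 := by
  obtain ⟨P, hP, _, _, hpos, hneg⟩ := s.toJordanDecomposition_spec
  rw [SignedMeasure.totalVariation, Measure.add_apply, hpos, hneg,
    SignedMeasure.toMeasureOfZeroLE_apply _ _ _ hE, SignedMeasure.toMeasureOfLEZero_apply _ _ _ hE]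
  simp [h _ inter_subset_right (hP.inter hE), h _ inter_subset_right (hP.compl.inter hE)]

lemma cTV_eq_zero_iff {E : Set X} (hE : MeasurableSet E) :
    cTV μ E = 0 ↔ ∀ F ⊆ E, MeasurableSet F → μ F = 0 := by
  constructor
  · intro h F hFE _
    have hF : μ.re.totalVariation F = 0 ∧ μ.im.totalVariation F = 0 := by
      simpa [cTV] using measure_mono_null hFE h
    exact Complex.ext (μ.re.null_of_totalVariation_zero hF.1)
      (μ.im.null_of_totalVariation_zero hF.2)
  · intro h
    have hre : μ.re.totalVariation E = 0 := totalVariation_eq_zero_of_forall_subset hE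
      fun F hFE hF => congrArg Complex.re (h F hFE hF)
    have him : μ.im.totalVariation E = 0 := totalVariation_eq_zero_of_forall_subset hE
      fun F hFE hF => congrArg Complex.im (h F hFE hF)
    rw [cTV, Measure.add_apply, hre, him, add_zero]

lemma cTV_absolutelyContinuous_iff {ν : Measure X} :
    cTV μ ≪ ν ↔ ∀ E : Set X, MeasurableSet E → ν E = 0 → μ E = 0 :=
  ⟨fun h E hE hνE => (cTV_eq_zero_iff hE).1 (h hνE) E subset_rfl hE,
    fun h => Measure.AbsolutelyContinuous.mk fun _ hE hνE => (cTV_eq_zero_iff hE).2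
      fun F hFE hF => h F hF (measure_mono_null hFE hνE)⟩

lemma ConcOn.ae_mem {A : Set X} (hμ : ConcOn μ A) (hA : MeasurableSet A) :
    ∀ᵐ x ∂cTV μ, x ∈ A :=
  (cTV_eq_zero_iff hA.compl).2 fun F hFA hF => hμ F hF hFA

lemma cInt_congr_ae {f g : X → ℂ} (h : f =ᵐ[cTV μ] g) : cInt μ f = cInt μ g := by
  unfold cInt
  rw [integral_congr_ae (ae_mono re_posPart_le_cTV h),
    integral_congr_ae (ae_mono re_negPart_le_cTV h),
    integral_congr_ae (ae_mono im_posPart_le_cTV h),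
    integral_congr_ae (ae_mono im_negPart_le_cTV h)]

lemma cInt_mul_const (f : X → ℂ) (c : ℂ) : cInt μ (fun x => f x * c) = cInt μ f * c := by
  simp only [cInt, integral_mul_const]
  ring

lemma cInt_indicator_one {E : Set X} (hE : MeasurableSet E) :
    cInt μ (E.indicator 1) = μ E := by
  have hre : (μ E).re = _ := μ.re.apply_eq_posPart_real_sub_negPart_real hE
  have him : (μ E).im = _ := μ.im.apply_eq_posPart_real_sub_negPart_real hE
  have integral_one (ρ : Measure X) : ∫ x, E.indicator (1 : X → ℂ) x ∂ρ = (ρ.real E : ℂ) := by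
    simp [integral_indicator hE]
  rw [← Complex.re_add_im (μ E), hre, him, cInt]
  simp only [integral_one, Complex.ofReal_sub]
  ring

lemma cInt_eq_integral_mul_rnDeriv {ν : Measure X} [SigmaFinite ν] (hμν : cTV μ ≪ ν)
    {f : X → ℂ} (hf : Integrable f (cTV μ)) :
    cInt μ f = ∫ x, f x * μ.rnDeriv ν x ∂ν := by
  have density (ρ : Measure X) [IsFiniteMeasure ρ] (hρ : ρ ≤ cTV μ) :
      Integrable (fun x => (ρ.rnDeriv ν x).toReal • f x) ν ∧
        ∫ x, f x ∂ρ = ∫ x, (ρ.rnDeriv ν x).toReal • f x ∂ν := by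
    have hρν : ρ ≪ ν := (Measure.absolutelyContinuous_of_le hρ).trans hμν
    exact ⟨(integrable_rnDeriv_smul_iff hρν).2 (hf.mono_measure hρ),
      (integral_rnDeriv_smul hρν).symm⟩
  obtain ⟨hi₁, h₁⟩ := density _ re_posPart_le_cTV
  obtain ⟨hi₂, h₂⟩ := density _ re_negPart_le_cTV
  obtain ⟨hi₃, h₃⟩ := density _ im_posPart_le_cTV
  obtain ⟨hi₄, h₄⟩ := density _ im_negPart_le_cTV
  rw [cInt, h₁, h₂, h₃, h₄, ← integral_sub hi₁ hi₂, ← integral_sub hi₃ hi₄, ← integral_const_mul]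
  refine (integral_add (hi₁.sub hi₂) ((hi₃.sub hi₄).const_mul Complex.I)).symm.trans ?_
  refine integral_congr_ae (.of_forall fun x => ?_)
  simp only [Pi.sub_apply, Complex.real_smul, ComplexMeasure.rnDeriv, SignedMeasure.rnDeriv,
    Complex.mk_eq_add_mul_I, Complex.ofReal_sub]
  ring

lemma cInt_integral_swap {Y : Type*} [MeasurableSpace Y] {ν : Measure Y} [SFinite ν]
    {F : X → Y → ℂ} (hF : Integrable (Function.uncurry F) ((cTV μ).prod ν)) :
    cInt μ (fun x => ∫ y, F x y ∂ν) = ∫ y, cInt μ (fun x => F x y) ∂ν := by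
  have swap (ρ : Measure X) [IsFiniteMeasure ρ] (hρ : ρ ≤ cTV μ) :
      Integrable (fun y => ∫ x, F x y ∂ρ) ν ∧
        ∫ x, ∫ y, F x y ∂ν ∂ρ = ∫ y, ∫ x, F x y ∂ρ ∂ν := by
    have hFρ : Integrable (Function.uncurry F) (ρ.prod ν) :=
      hF.mono_measure (Measure.prod_mono hρ le_rfl)
    exact ⟨hFρ.integral_prod_right, integral_integral_swap hFρ⟩
  obtain ⟨hi₁, h₁⟩ := swap _ re_posPart_le_cTV
  obtain ⟨hi₂, h₂⟩ := swap _ re_negPart_le_cTV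
  obtain ⟨hi₃, h₃⟩ := swap _ im_posPart_le_cTV
  obtain ⟨hi₄, h₄⟩ := swap _ im_negPart_le_cTV
  simp only [cInt]
  rw [h₁, h₂, h₃, h₄, ← integral_sub hi₁ hi₂, ← integral_sub hi₃ hi₄, ← integral_const_mul]
  exact (integral_add (hi₁.sub hi₂) ((hi₃.sub hi₄).const_mul Complex.I)).symm

lemma apply_eq_setIntegral_rnDeriv_cTV {E : Set X} (hE : MeasurableSet E) :
    μ E = ∫ x in E, μ.rnDeriv (cTV μ) x ∂cTV μ := by
  have hint : Integrable (E.indicator (1 : X → ℂ)) (cTV μ) := (integrable_const 1).indicator hE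
  rw [← cInt_indicator_one hE, cInt_eq_integral_mul_rnDeriv .rfl hint, ← integral_indicator hE]
  congr with x
  by_cases hx : x ∈ E <;> simp [hx]

end ComplexMeasure

section IntegralOperator

variable {𝕜 α E : Type*} [RCLike 𝕜] [MeasurableSpace α] {ν : Measure α}
  [NormedAddCommGroup E] [NormedSpace 𝕜 E]

lemma integrable_smul_of_ae_mem_isBounded {f : α → 𝕜} {G : α → E} {S : Set E} (hf : Integrable f ν)
    (hG : AEStronglyMeasurable G ν) (hS : Bornology.IsBounded S) (hGS : ∀ᵐ x ∂ν, G x ∈ S) :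
    Integrable (fun x => f x • G x) ν := by
  obtain ⟨C, hC⟩ := hS.exists_norm_le
  exact hf.smul_bdd C hG (hGS.mono fun x hx => hC _ hx)

variable [NormedSpace ℝ E] [IsScalarTower ℝ 𝕜 E] [CompleteSpace E]

-- A separating functional `ℓ` with `re ℓ ≤ r < re ℓ (∫ f • G)` on `K` would satisfy `‖ℓ (G x)‖ ≤ r`
-- almost everywhere, as `K` contains all rotations of `G x`.
lemma integral_smul_mem_of_forall_smul_mem {K : Set E} (hK : Convex ℝ K) (hKc : IsClosed K)
    (hK0 : (0 : E) ∈ K) {f : α → 𝕜} {G : α → E} (hf : Integrable f ν) (hf1 : ∫ x, ‖f x‖ ∂ν ≤ 1)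
    (hfG : Integrable (fun x => f x • G x) ν)
    (hG : ∀ᵐ x ∂ν, ∀ c : 𝕜, ‖c‖ ≤ 1 → c • G x ∈ K) :
    ∫ x, f x • G x ∂ν ∈ K := by
  by_contra hmem
  obtain ⟨ℓ, r, hℓK, hr⟩ :=
    RCLike.geometric_hahn_banach_closed_point (𝕜 := 𝕜) hK hKc hmem
  have hr0 : 0 < r := by simpa using hℓK 0 hK0
  have hℓG : ∀ᵐ x ∂ν, ‖ℓ (G x)‖ ≤ r := by
    filter_upwards [hG] with x hx
    obtain ⟨c, hc, hcℓ⟩ := RCLike.exists_norm_eq_mul_self (ℓ (G x))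
    have hre := hℓK _ (hx c hc.le)
    rw [map_smul, smul_eq_mul, ← hcℓ, RCLike.ofReal_re] at hre
    exact hre.le
  refine hr.not_ge ?_
  calc RCLike.re (ℓ (∫ x, f x • G x ∂ν))
      ≤ ‖ℓ (∫ x, f x • G x ∂ν)‖ := RCLike.re_le_norm _
    _ = ‖∫ x, f x * ℓ (G x) ∂ν‖ := by simp [← ℓ.integral_comp_comm hfG]
    _ ≤ ∫ x, ‖f x‖ * r ∂ν := by
        refine norm_integral_le_of_norm_le (hf.norm.mul_const r) ?_
        filter_upwards [hℓG] with x hx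
        rw [norm_mul]
        gcongr
    _ ≤ r := by
        rw [integral_mul_const]
        exact mul_le_of_le_one_left hr0.le hf1

lemma isCompactOperator_of_forall_eq_integral_smul {T : Lp 𝕜 1 ν →L[𝕜] E} {G : α → E} {S : Set E}
    (hG : AEStronglyMeasurable G ν) (hS : IsCompact S) (hGS : ∀ᵐ x ∂ν, G x ∈ S)
    (hT : ∀ f : Lp 𝕜 1 ν, T f = ∫ x, f x • G x ∂ν) : IsCompactOperator T := by
  let R : Set E := insert 0 (Metric.closedBall (0 : 𝕜) 1 • S)
  have hR : IsCompact R := ((isCompact_closedBall 0 1).smul_set hS).insert 0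
  have hRK : R ⊆ closure (convexHull ℝ R) := (subset_convexHull ℝ R).trans subset_closure
  have hKc : IsCompact (closure (convexHull ℝ R)) :=
    isCompact_closure_of_totallyBounded_quasiComplete (𝕜 := ℝ) hR.totallyBounded.convexHull
  refine (isCompactOperator_iff_image_closedBall_subset_compact T.toLinearMap one_pos).2
    ⟨closure (convexHull ℝ R), hKc, ?_⟩
  rintro _ ⟨f, hf, rfl⟩
  have hfi : Integrable f ν := L1.integrable_coeFn f
  have hf1 : ∫ x, ‖f x‖ ∂ν ≤ 1 := by
    rw [← L1.norm_eq_integral_norm]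
    exact mem_closedBall_zero_iff.1 hf
  have hfG : Integrable (fun x => f x • G x) ν :=
    integrable_smul_of_ae_mem_isBounded hfi hG hS.isBounded hGS
  rw [ContinuousLinearMap.coe_coe, hT]
  refine integral_smul_mem_of_forall_smul_mem (convex_convexHull ℝ R).closure isClosed_closure
    (hRK (mem_insert _ _)) hfi hf1 hfG (hGS.mono fun x hx c hc => hRK (mem_insert_of_mem _ ?_))
  exact smul_mem_smul (mem_closedBall_zero_iff.2 hc) hx

end IntegralOperator

section WeaklyCompact

variable {𝕜 E F : Type*} [RCLike 𝕜] [NormedAddCommGroup E] [NormedSpace 𝕜 E]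
  [NormedAddCommGroup F] [NormedSpace 𝕜 F]

/-- `T` is weakly compact: the image of the closed unit ball is relatively compact in the weak
topology. -/
def IsWeaklyCompactOperator (T : E →L[𝕜] F) : Prop :=
  IsCompact (closure (toWeakSpace 𝕜 F '' (T '' Metric.closedBall 0 1)))

lemma isWeaklyCompactOperator_of_isCompactOperator {T : E →L[𝕜] F} (hT : IsCompactOperator T) :
    IsWeaklyCompactOperator T := by
  have hstrong : IsCompact (closure (T '' Metric.closedBall 0 1)) :=
    IsCompactOperator.isCompact_closure_image_closedBall (f := T.toLinearMap) hT 1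
  have hweak : IsCompact (toWeakSpaceCLM 𝕜 F '' closure (T '' Metric.closedBall 0 1)) :=
    hstrong.image (toWeakSpaceCLM 𝕜 F).continuous
  exact hweak.of_isClosed_subset isClosed_closure
    (closure_minimal (image_mono subset_closure) hweak.isClosed)

lemma exists_forall_apply_eq_of_isCompact_closure_toWeakSpace_image {ι : Type*} {l : Filter ι}
    [l.NeBot] {S : Set E} (hS : IsCompact (closure (toWeakSpace 𝕜 E '' S))) {u : ι → E}
    (hu : ∀ᶠ i in l, u i ∈ S) :
    ∃ x : E, ∀ (ℓ : StrongDual 𝕜 E) (c : 𝕜), Tendsto (fun i => ℓ (u i)) l (𝓝 c) → ℓ x = c := by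
  let 𝒰 := (Ultrafilter.of l).map fun i => toWeakSpace 𝕜 E (u i)
  have h𝒰 : ↑𝒰 ≤ 𝓟 (closure (toWeakSpace 𝕜 E '' S)) :=
    le_principal_iff.2 (Ultrafilter.of_le l
      (hu.mono fun i hi => subset_closure (mem_image_of_mem _ hi)))
  obtain ⟨x, -, hx⟩ := hS.ultrafilter_le_nhds 𝒰 h𝒰
  refine ⟨(toWeakSpace 𝕜 E).symm x, fun ℓ c hc => ?_⟩
  have hℓ := (WeakBilin.eval_continuous (topDualPairing 𝕜 E).flip ℓ).tendsto x
  exact tendsto_nhds_unique (hℓ.comp hx) (hc.mono_left (Ultrafilter.of_le l))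

end WeaklyCompact

section TestFunctions

variable {E : Type*} [NormedAddCommGroup E] [NormedSpace ℝ E] [FiniteDimensional ℝ E]
  [MeasurableSpace E] [BorelSpace E] {U : Set E} {ν m : Measure E} {f g : E → ℂ}

lemma ae_eq_zero_of_forall_integral_boundedContinuous_mul_eq_zero (hU : IsOpen U)
    (hf : Integrable f ν)
    (h : ∀ φ : E →ᵇ ℂ, (∀ x ∉ U, φ x = 0) → ∫ x, φ x * f x ∂ν = 0) :
    ∀ᵐ x ∂ν, x ∈ U → f x = 0 := by
  refine hU.ae_eq_zero_of_integral_contDiff_smul_eq_zero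
    (hf.locallyIntegrable.locallyIntegrableOn U) fun ψ hψ hψc hψU => ?_
  obtain ⟨C, hC⟩ := hψc.exists_bound_of_continuous hψ.continuous
  let φ : E →ᵇ ℂ := .ofNormedAddCommGroup (fun x => (ψ x : ℂ))
    (Complex.continuous_ofReal.comp hψ.continuous) C (by simpa using hC)
  have hφ : ∀ x ∉ U, φ x = 0 := fun x hx =>
    Complex.ofReal_eq_zero.2 (image_eq_zero_of_notMem_tsupport fun hxs => hx (hψU hxs))
  simpa [φ, Complex.real_smul] using h φ hφ

-- Compare the densities of `f ∂ν` and `g ∂m` with respect to the common measure `ν + m`.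
lemma setIntegral_eq_of_forall_integral_boundedContinuous_mul_eq [SigmaFinite ν] [SigmaFinite m]
    (hU : IsOpen U) (hf : Integrable f ν) (hg : Integrable g m)
    (h : ∀ φ : E →ᵇ ℂ, (∀ x ∉ U, φ x = 0) → ∫ x, φ x * f x ∂ν = ∫ x, φ x * g x ∂m)
    {s : Set E} (hs : MeasurableSet s) (hsU : s ⊆ U) :
    ∫ x in s, f x ∂ν = ∫ x in s, g x ∂m := by
  let ρ := ν + m
  have hνρ : ν ≪ ρ := Measure.absolutelyContinuous_of_le (Measure.le_add_right le_rfl)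
  have hmρ : m ≪ ρ := Measure.absolutelyContinuous_of_le (Measure.le_add_left le_rfl)
  let f' : E → ℂ := fun x => (ν.rnDeriv ρ x).toReal • f x
  let g' : E → ℂ := fun x => (m.rnDeriv ρ x).toReal • g x
  have hf' : Integrable f' ρ := (integrable_rnDeriv_smul_iff hνρ).2 hf
  have hg' : Integrable g' ρ := (integrable_rnDeriv_smul_iff hmρ).2 hg
  have hφfg (φ : E →ᵇ ℂ) (hφ : ∀ x ∉ U, φ x = 0) : ∫ x, φ x * (f' - g') x ∂ρ = 0 := by
    have hbdd {F : E → ℂ} (hF : Integrable F ρ) : Integrable (fun x => φ x * F x) ρ :=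
      hF.bdd_mul φ.continuous.aestronglyMeasurable (.of_forall φ.norm_coe_le_norm)
    simp only [Pi.sub_apply, mul_sub]
    rw [integral_sub (hbdd hf') (hbdd hg'), sub_eq_zero]
    simp only [f', g', mul_smul_comm]
    rw [integral_rnDeriv_smul hνρ, integral_rnDeriv_smul hmρ, h φ hφ]
  have hae : ∀ᵐ x ∂ρ, x ∈ U → (f' - g') x = 0 :=
    ae_eq_zero_of_forall_integral_boundedContinuous_mul_eq_zero hU (hf'.sub hg') hφfg
  rw [← setIntegral_rnDeriv_smul hνρ hs, ← setIntegral_rnDeriv_smul hmρ hs]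
  exact setIntegral_congr_ae hs (hae.mono fun x hx hxs => sub_eq_zero.1 (hx (hsU hxs)))

end TestFunctions

section Pairing

/-- The functional `f ↦ ∫₀¹ φ f` on `L¹[0,1)` induced by a bounded continuous function `φ`. -/
def volterraPairing (φ : ℝ →ᵇ ℂ) : StrongDual ℂ Volterra :=
  (ContinuousLinearMap.mul ℂ ℂ).lpPairing (volume.restrict (Ico (0 : ℝ) 1)) ⊤ 1
    (MemLp.toLp φ φ.memLp_top)

lemma volterraPairing_apply (φ : ℝ →ᵇ ℂ) (f : Volterra) :
    volterraPairing φ f = ∫ t in Ico (0 : ℝ) 1, φ t * f t := by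
  rw [volterraPairing, ContinuousLinearMap.lpPairing_eq_integral]
  refine integral_congr_ae ?_
  filter_upwards [MemLp.coeFn_toLp (μ := volume.restrict (Ico (0 : ℝ) 1)) φ.memLp_top] with t ht
  rw [ht, ContinuousLinearMap.mul_apply']

lemma eq_of_forall_volterraPairing_eq {f g : Volterra}
    (h : ∀ φ : ℝ →ᵇ ℂ, (∀ x ∉ Ioo (0 : ℝ) 1, φ x = 0) →
      volterraPairing φ f = volterraPairing φ g) : f = g := by
  have hpair (φ : ℝ →ᵇ ℂ) (hφ : ∀ x ∉ Ioo (0 : ℝ) 1, φ x = 0) :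
      ∫ t in Ico (0 : ℝ) 1, φ t * (f - g : Volterra) t = 0 := by
    rw [← volterraPairing_apply, map_sub, h φ hφ, sub_self]
  have hzero := ae_eq_zero_of_forall_integral_boundedContinuous_mul_eq_zero isOpen_Ioo
    (L1.integrable_coeFn (f - g)) hpair
  have hmem : ∀ᵐ t ∂volume.restrict (Ico (0 : ℝ) 1), t ∈ Ioo (0 : ℝ) 1 := by
    rw [← restrict_Ioo_eq_restrict_Ico]
    exact ae_restrict_mem measurableSet_Ioo
  rw [← sub_eq_zero, Lp.eq_zero_iff_ae_eq_zero]
  filter_upwards [hzero, hmem] with t ht htmem using ht htmem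

end Pairing

section Adjoint

variable {μ : ComplexMeasure ℝ}

/-- The adjoint of `D_μ` on test functions, `D_μ' φ (t) = t ∫ φ (t + s) dμ(s)`. -/
def adjointDmu (μ : ComplexMeasure ℝ) (φ : ℝ →ᵇ ℂ) (t : ℝ) : ℂ :=
  t * cInt μ fun s => φ (t + s)

lemma adjointDmu_eq_mul_integral_rnDeriv {ν : Measure ℝ} [SigmaFinite ν] (hμν : cTV μ ≪ ν)
    (φ : ℝ →ᵇ ℂ) (t : ℝ) :
    adjointDmu μ φ t = t * ∫ s, φ (t + s) * μ.rnDeriv ν s ∂ν := by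
  have hint : Integrable (fun s => φ (t + s)) (cTV μ) :=
    (φ.compContinuous (.addLeft t)).integrable _
  rw [adjointDmu, cInt_eq_integral_mul_rnDeriv hμν hint]

lemma continuous_adjointDmu (φ : ℝ →ᵇ ℂ) : Continuous (adjointDmu μ φ) := by
  have translate (ρ : Measure ℝ) [IsFiniteMeasure ρ] : Continuous fun t => ∫ s, φ (t + s) ∂ρ :=
    continuous_of_dominated (fun t => by fun_prop)
      (fun t => .of_forall fun s => φ.norm_coe_le_norm _) (integrable_const ‖φ‖)
      (.of_forall fun s => by fun_prop)
  unfold adjointDmu cInt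
  fun_prop

lemma IsDmu.volterraPairing_apply_eq_integral {D : Volterra →L[ℂ] Volterra} (hD : IsDmu μ D)
    (hμ : ConcOn μ (Ico 0 1)) {φ : ℝ →ᵇ ℂ} (hφ : ∀ x, 1 ≤ x → φ x = 0) (f : Volterra) :
    volterraPairing φ (D f) = ∫ t in Ico (0 : ℝ) 1, f t * adjointDmu μ φ t := by
  have extend : ∀ᵐ s ∂cTV μ, ∫ t in Ico (0 : ℝ) (1 - s), φ (t + s) * (t * f t) =
      ∫ t in Ico (0 : ℝ) 1, φ (t + s) * (t * f t) := by
    filter_upwards [hμ.ae_mem measurableSet_Ico] with s hs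
    refine (setIntegral_eq_of_subset_of_forall_sdiff_eq_zero measurableSet_Ico
      (Ico_subset_Ico_right (sub_le_self 1 hs.1)) fun t ht => ?_).symm
    rw [hφ _ (by grind), zero_mul]
  have hint : Integrable (Function.uncurry fun s t : ℝ => φ (t + s) * (t * f t))
      ((cTV μ).prod (volume.restrict (Ico 0 1))) := by
    have hXf : Integrable (fun t : ℝ => (t : ℂ) * f t) (volume.restrict (Ico 0 1)) := by
      refine (L1.integrable_coeFn f).bdd_mul (c := 1) (by fun_prop) ?_
      filter_upwards [ae_restrict_mem measurableSet_Ico] with t ht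
      simpa [abs_of_nonneg ht.1] using ht.2.le
    exact (hXf.comp_snd (cTV μ)).bdd_mul (by fun_prop) (.of_forall fun p => φ.norm_coe_le_norm _)
  rw [volterraPairing_apply, hD f φ φ.continuous.continuousOn (hφ 1 le_rfl),
    cInt_congr_ae extend, cInt_integral_swap hint]
  refine integral_congr_ae (.of_forall fun t => ?_)
  simp only [cInt_mul_const, adjointDmu]
  ring

end Adjoint

section Compact

/-- The curve `t ↦ t g(· - t)|_[0,1)` of weighted translates of `g ∈ L¹(ℝ)`. When `g` is the density
of `μ`, this is the kernel of `D_μ` as a vector-valued integral operator. -/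
def weightedTranslate (g : Lp ℂ 1 (volume : Measure ℝ)) (t : ℝ) : Volterra :=
  (t : ℂ) • LpToLpRestrictCLM ℝ ℂ ℂ volume 1 (Ico 0 1) (DomAddAct.mk (-t) +ᵥ g)

lemma continuous_weightedTranslate (g : Lp ℂ 1 (volume : Measure ℝ)) :
    Continuous (weightedTranslate g) := by
  have : Fact ((1 : ENNReal) ≠ ⊤) := ⟨ENNReal.one_ne_top⟩
  unfold weightedTranslate
  fun_prop

lemma volterraPairing_weightedTranslate {g : ℝ → ℂ} (hg : Integrable g) {φ : ℝ →ᵇ ℂ}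
    (hφ : ∀ x ∉ Ico (0 : ℝ) 1, φ x = 0) (t : ℝ) :
    volterraPairing φ (weightedTranslate hg.toL1 t) = t * ∫ s, φ (t + s) * g s := by
  have hcoe : LpToLpRestrictCLM ℝ ℂ ℂ volume 1 (Ico 0 1) (DomAddAct.mk (-t) +ᵥ hg.toL1)
      =ᵐ[volume.restrict (Ico 0 1)] fun x => g (-t + x) := by
    refine (LpToLpRestrictCLM_coeFn ℂ (Ico 0 1) (DomAddAct.mk (-t) +ᵥ hg.toL1)).trans ?_
    rw [Integrable.toL1, DomAddAct.mk_vadd_toLp]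
    exact ae_restrict_of_ae (MemLp.coeFn_toLp _)
  calc volterraPairing φ (weightedTranslate hg.toL1 t)
      = t * ∫ x in Ico (0 : ℝ) 1, φ x * g (-t + x) := by
        rw [weightedTranslate, map_smul, smul_eq_mul, volterraPairing_apply]
        congr 1
        exact integral_congr_ae (hcoe.mono fun x hx => congrArg (φ x * ·) hx)
    _ = t * ∫ x, φ x * g (-t + x) := by
        rw [setIntegral_eq_integral_of_forall_compl_eq_zero fun x hx => by rw [hφ x hx, zero_mul]]
    _ = t * ∫ s, φ (t + s) * g s := by
        rw [← integral_add_left_eq_self _ t]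
        simp only [neg_add_cancel_left]

variable {μ : ComplexMeasure ℝ} {D : Volterra →L[ℂ] Volterra}

lemma IsDmu.isCompactOperator_of_cTV_absolutelyContinuous (hD : IsDmu μ D) (hμ : ConcOn μ (Ico 0 1))
    (hac : cTV μ ≪ volume) : IsCompactOperator D := by
  let G := weightedTranslate ((ComplexMeasure.integrable_rnDeriv μ volume).toL1)
  have hGc : Continuous G := continuous_weightedTranslate _
  have hS : IsCompact (G '' Icc 0 1) := isCompact_Icc.image hGc
  have hGS : ∀ᵐ t ∂volume.restrict (Ico (0 : ℝ) 1), G t ∈ G '' Icc 0 1 :=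
    (ae_restrict_mem measurableSet_Ico).mono fun t ht => mem_image_of_mem G (Ico_subset_Icc_self ht)
  refine isCompactOperator_of_forall_eq_integral_smul hGc.aestronglyMeasurable hS hGS fun f => ?_
  have hfG : Integrable (fun t => f t • G t) (volume.restrict (Ico (0 : ℝ) 1)) :=
    integrable_smul_of_ae_mem_isBounded (L1.integrable_coeFn f) hGc.aestronglyMeasurable
      hS.isBounded hGS
  refine eq_of_forall_volterraPairing_eq fun φ hφ => ?_
  rw [hD.volterraPairing_apply_eq_integral hμ (fun x hx => hφ x (by grind)),
    ← ContinuousLinearMap.integral_comp_comm _ hfG]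
  refine integral_congr_ae (.of_forall fun t => ?_)
  simp only [map_smul, smul_eq_mul, G]
  rw [volterraPairing_weightedTranslate _ (fun x hx => hφ x (by grind)),
    adjointDmu_eq_mul_integral_rnDeriv hac]

end Compact

section Average

/-- The normalized indicator `ε⁻¹ 1_[a,a+ε)` in `L¹[0,1)`, an approximation of the unit mass
at `a`. -/
def averageAt (a ε : ℝ) : Volterra :=
  indicatorConstLp 1 (measurableSet_Ico (a := a) (b := a + ε))
    (measure_ne_top (volume.restrict (Ico (0 : ℝ) 1)) _) ((ε⁻¹ : ℝ) : ℂ)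

variable {a ε : ℝ}

lemma norm_averageAt_le_one (a : ℝ) (hε : 0 < ε) : ‖averageAt a ε‖ ≤ 1 := by
  have hvol : (volume.restrict (Ico (0 : ℝ) 1)).real (Ico a (a + ε)) ≤ ε :=
    ENNReal.toReal_le_of_le_ofReal hε.le ((Measure.restrict_apply_le _ _).trans (by simp))
  calc ‖averageAt a ε‖ = ε⁻¹ * (volume.restrict (Ico (0 : ℝ) 1)).real (Ico a (a + ε)) := by
        rw [averageAt, norm_indicatorConstLp one_ne_zero ENNReal.one_ne_top]
        simp [abs_of_pos hε]
    _ ≤ ε⁻¹ * ε := by gcongr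
    _ = 1 := inv_mul_cancel₀ hε.ne'

lemma integral_averageAt_mul (ha : 0 ≤ a) (hε : 0 ≤ ε) (haε : a + ε ≤ 1) (F : ℝ → ℂ) :
    ∫ t in Ico (0 : ℝ) 1, averageAt a ε t * F t = ε⁻¹ • ∫ t in a..a + ε, F t := by
  have hcoe : (fun t => averageAt a ε t * F t) =ᵐ[volume.restrict (Ico 0 1)]
      (Ico a (a + ε)).indicator fun t => ε⁻¹ • F t := by
    unfold averageAt
    filter_upwards [indicatorConstLp_coeFn (p := 1) (hs := measurableSet_Ico (a := a) (b := a + ε))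
      (hμs := measure_ne_top (volume.restrict (Ico (0 : ℝ) 1)) _) (c := ((ε⁻¹ : ℝ) : ℂ))] with t ht
    simp only [ht, indicator_apply, ite_mul, zero_mul, Complex.real_smul]
  rw [integral_congr_ae hcoe, setIntegral_indicator measurableSet_Ico,
    inter_eq_right.2 (Ico_subset_Ico ha haε), integral_smul,
    intervalIntegral.integral_of_le (by linarith), integral_Ico_eq_integral_Ioc]

lemma tendsto_integral_averageAt_mul (ha : 0 ≤ a) (ha1 : a < 1) {F : ℝ → ℂ} (hF : Continuous F) :
    Tendsto (fun ε => ∫ t in Ico (0 : ℝ) 1, averageAt a ε t * F t) (𝓝[>] 0) (𝓝 (F a)) := by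
  have hslope : Tendsto (fun ε : ℝ => ε⁻¹ • ∫ t in a..a + ε, F t) (𝓝[>] 0) (𝓝 (F a)) := by
    simpa using (hF.integral_hasStrictDerivAt a a).hasDerivAt.tendsto_slope_zero_right
  refine hslope.congr' ?_
  filter_upwards [Ioo_mem_nhdsGT (sub_pos.2 ha1)] with ε hε
  exact (integral_averageAt_mul ha hε.1.le (by linarith [hε.2]) F).symm

end Average

section AbsolutelyContinuous

variable {μ : ComplexMeasure ℝ} {D : Volterra →L[ℂ] Volterra} {a : ℝ}

-- `h` is a weak cluster point of the images under `D` of the averages at `a`.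
lemma IsDmu.exists_forall_volterraPairing_eq_adjointDmu (hD : IsDmu μ D) (hμ : ConcOn μ (Ico 0 1))
    (hK : IsWeaklyCompactOperator D) (ha : 0 ≤ a) (ha1 : a < 1) :
    ∃ h : Volterra, ∀ φ : ℝ →ᵇ ℂ, (∀ x, 1 ≤ x → φ x = 0) →
      volterraPairing φ h = adjointDmu μ φ a := by
  have hmem : ∀ᶠ ε in 𝓝[>] 0, D (averageAt a ε) ∈ D '' Metric.closedBall 0 1 :=
    eventually_mem_nhdsWithin.mono fun ε hε =>
      mem_image_of_mem D (mem_closedBall_zero_iff.2 (norm_averageAt_le_one a hε))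
  obtain ⟨h, hh⟩ := exists_forall_apply_eq_of_isCompact_closure_toWeakSpace_image hK hmem
  refine ⟨h, fun φ hφ => hh _ _ ?_⟩
  simp only [hD.volterraPairing_apply_eq_integral hμ hφ]
  exact tendsto_integral_averageAt_mul ha ha1 (continuous_adjointDmu φ)

lemma mul_apply_eq_setIntegral_of_forall_volterraPairing_eq_adjointDmu {h : Volterra}
    (hh : ∀ φ : ℝ →ᵇ ℂ, (∀ x ∉ Ioo (0 : ℝ) 1, φ x = 0) →
      volterraPairing φ h = adjointDmu μ φ a)
    {B : Set ℝ} (hB : MeasurableSet B) (haB : (-a + ·) ⁻¹' B ⊆ Ioo (0 : ℝ) 1) :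
    a * μ B = ∫ t in (-a + ·) ⁻¹' B, h t ∂volume.restrict (Ico 0 1) := by
  let θ : ℝ → ℂ := fun s => a * μ.rnDeriv (cTV μ) s
  have hshift : MeasurableEmbedding (a + · : ℝ → ℝ) := measurableEmbedding_addLeft a
  have hθ : Integrable (fun x => θ (-a + x)) ((cTV μ).map (a + ·)) := by
    rw [hshift.integrable_map_iff]
    simpa [Function.comp_def, θ] using
      (ComplexMeasure.integrable_rnDeriv μ (cTV μ)).const_mul (a : ℂ)
  have hpair (φ : ℝ →ᵇ ℂ) (hφ : ∀ x ∉ Ioo (0 : ℝ) 1, φ x = 0) :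
      ∫ x, φ x * θ (-a + x) ∂(cTV μ).map (a + ·) = ∫ t in Ico (0 : ℝ) 1, φ t * h t := by
    rw [← volterraPairing_apply, hh φ hφ, adjointDmu_eq_mul_integral_rnDeriv .rfl,
      hshift.integral_map, ← integral_const_mul]
    simp only [θ, neg_add_cancel_left, mul_left_comm]
  calc a * μ B = ∫ s in B, θ s ∂cTV μ := by
        rw [apply_eq_setIntegral_rnDeriv_cTV hB, integral_const_mul]
    _ = ∫ x in (-a + ·) ⁻¹' B, θ (-a + x) ∂(cTV μ).map (a + ·) := by
        simp [hshift.setIntegral_map, preimage_preimage]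
    _ = ∫ t in (-a + ·) ⁻¹' B, h t ∂volume.restrict (Ico 0 1) :=
        setIntegral_eq_of_forall_integral_boundedContinuous_mul_eq isOpen_Ioo hθ
          (L1.integrable_coeFn h) hpair (measurable_const_add (-a) hB) haB

lemma IsDmu.apply_eq_zero_of_volume_eq_zero (hD : IsDmu μ D) (hμ : ConcOn μ (Ico 0 1))
    (hK : IsWeaklyCompactOperator D) (ha : 0 < a) (ha1 : a < 1) {B : Set ℝ}
    (hB : MeasurableSet B) (hBa : B ⊆ Ico 0 (1 - a)) (hB0 : volume B = 0) : μ B = 0 := by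
  obtain ⟨h, hh⟩ := hD.exists_forall_volterraPairing_eq_adjointDmu hμ hK ha.le ha1
  have haB : (-a + ·) ⁻¹' B ⊆ Ioo (0 : ℝ) 1 := fun x hx => by
    obtain ⟨hx0, hxa⟩ := hBa hx
    constructor <;> linarith
  have hnull : volume.restrict (Ico 0 1) ((-a + ·) ⁻¹' B) = 0 :=
    Measure.restrict_le_self.absolutelyContinuous ((measure_preimage_add _ _ _).trans hB0)
  have hzero := mul_apply_eq_setIntegral_of_forall_volterraPairing_eq_adjointDmu
    (fun φ hφ => hh φ fun x hx => hφ x (by grind)) hB haB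
  rw [setIntegral_measure_zero _ hnull] at hzero
  exact (mul_eq_zero.1 hzero).resolve_left (Complex.ofReal_ne_zero.2 ha.ne')

lemma IsDmu.cTV_absolutelyContinuous_of_isWeaklyCompactOperator (hD : IsDmu μ D)
    (hμ : ConcOn μ (Ico 0 1)) (hK : IsWeaklyCompactOperator D) :
    cTV μ ≪ volume := by
  refine Measure.AbsolutelyContinuous.mk fun E hE hE0 => ?_
  have htrunc (n : ℕ) : cTV μ (E ∩ Ico 0 (1 - 1 / ((n : ℝ) + 2))) = 0 := by
    refine (cTV_eq_zero_iff (hE.inter measurableSet_Ico)).2 fun F hFE hF => ?_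
    exact hD.apply_eq_zero_of_volume_eq_zero hμ hK (by positivity)
      ((div_lt_one (by positivity)).2 (by linarith [n.cast_nonneg (α := ℝ)])) hF
      (hFE.trans inter_subset_right) (measure_mono_null (hFE.trans inter_subset_left) hE0)
  rw [measure_eq_zero_iff_ae_notMem]
  filter_upwards [ae_all_iff.2 fun n => measure_eq_zero_iff_ae_notMem.1 (htrunc n),
    hμ.ae_mem measurableSet_Ico] with x hx hxI hxE
  obtain ⟨n, hn⟩ := exists_nat_one_div_lt (sub_pos.2 hxI.2)
  have hmono : 1 / ((n : ℝ) + 2) ≤ 1 / ((n : ℝ) + 1) := by gcongr; norm_num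
  exact hx n ⟨hxE, hxI.1, by linarith⟩

end AbsolutelyContinuous

lemma tendsto_mul_cTV_Ico (μ : ComplexMeasure ℝ) :
    Tendsto (fun t : ℝ => t * (cTV μ (Ico 0 (1 - t))).toReal) (𝓝[>] 0) (𝓝 0) := by
  have hid : Tendsto (fun t : ℝ => t) (𝓝[>] 0) (𝓝 0) := nhdsWithin_le_nhds
  refine hid.zero_mul_isBoundedUnder_le (isBoundedUnder_of ⟨(cTV μ).real univ, fun t => ?_⟩)
  rw [Function.comp_apply, Real.norm_of_nonneg ENNReal.toReal_nonneg]
  exact measureReal_mono (subset_univ _)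

/-- For a finite complex Borel measure `μ` on `[0,1)` with
`t |μ|([0,1-t))` bounded as `t → 0⁺`, the following are equivalent for the derivation
`D_μ f = (Xf) * μ` on `L¹[0,1)`:
(a) `D_μ` is compact; (b) `D_μ` is weakly compact;
(c) `μ` is absolutely continuous and `t |μ|([0,1-t)) → 0` as `t → 0⁺`. -/
theorem compact_iff_weakly_compact_iff_ac (μ : ComplexMeasure ℝ)
    (hμc : ConcOn μ (Ico 0 1))
    (hμb : ∃ C δ : ℝ, 0 < δ ∧ ∀ t : ℝ, 0 < t → t < δ →
      t * (cTV μ (Ico 0 (1 - t))).toReal ≤ C)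
    (D : Volterra →L[ℂ] Volterra) (hD : IsDmu μ D) :
    (IsCompactOperator (⇑D) ↔
      ((∀ E : Set ℝ, MeasurableSet E → volume E = 0 → μ E = 0) ∧
        Tendsto (fun t : ℝ => t * (cTV μ (Ico 0 (1 - t))).toReal)
          (nhdsWithin 0 (Ioi 0)) (nhds 0))) ∧
    (IsCompact (closure
        (⇑(toWeakSpace ℂ Volterra) '' (⇑D '' Metric.closedBall 0 1))) ↔
      ((∀ E : Set ℝ, MeasurableSet E → volume E = 0 → μ E = 0) ∧
        Tendsto (fun t : ℝ => t * (cTV μ (Ico 0 (1 - t))).toReal)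
          (nhdsWithin 0 (Ioi 0)) (nhds 0))) := by
  rw [← cTV_absolutelyContinuous_iff, and_iff_left (tendsto_mul_cTV_Ico μ)]
  have ac_of_weaklyCompact := hD.cTV_absolutelyContinuous_of_isWeaklyCompactOperator hμc
  have compact_of_ac := hD.isCompactOperator_of_cTV_absolutelyContinuous hμc
  have weaklyCompact_of_compact : IsCompactOperator D → IsWeaklyCompactOperator D :=
    isWeaklyCompactOperator_of_isCompactOperator
  exact ⟨⟨ac_of_weaklyCompact ∘ weaklyCompact_of_compact, compact_of_ac⟩,
    ⟨ac_of_weaklyCompact, weaklyCompact_of_compact ∘ compact_of_ac⟩⟩
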